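/- Quantitative Laplace principle: Let E : ℝ^d → ℝ be continuous with minimum value 0 attained at v*, and suppose there exist E_∞, R₀, η > 0 and ν ∈ (0, ∞) such that ‖v − v*‖ ≤ (1/η) E(v)^ν for all v ∈ B_{R₀}(v*) and E(v) > E_∞ for all v ∉ B_{R₀}(v*). Let μ be a probability measure on ℝ^d with finite first moment, and fix α > 0. Then for any r ∈ (0, R₀] and q > 0 with q + E_r ≤ E_∞, where E_r := sup_{v ∈ B_r(v*)} E(v), the consensus point v_α(μ) := (∫ v e^{−αE(v)} dμ(v)) / (∫ e^{−αE(v)} dμ(v)) satisfies ‖v_α(μ) − v*‖ ≤ (q + E_r)^ν/η + (exp(−αq)/μ(B_r(v*))) · ∫‖v − v*‖ dμ(v), provided μ(B_r(v*)) > 0. -/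

import Mathlib

open MeasureTheory

/-!
The consensus point is the mean of `μ` tilted by `φ = -α E`. Its distance to `v*` is at most the
tilted mean of `‖v - v*‖`. Where `E ≤ q + E_r`, the growth condition bounds `‖v - v*‖` by
`(q + E_r) ^ ν / η`. Elsewhere the tilted density is at most `exp (-α (q + E_r)) / ∫ exp φ ∂μ`, and
`∫ exp φ ∂μ ≥ exp (-α E_r) * μ (B_r(v*))` because `E ≤ E_r` on that ball.
-/

section Tilted

variable {X : Type*} [MeasurableSpace X] {μ : Measure X} {φ : X → ℝ}

lemma exp_mul_measureReal_le_integral_exp {A : Set X} {s : ℝ} (hA : ∀ x ∈ A, s ≤ φ x)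
    (hφ : Integrable (fun x => Real.exp (φ x)) μ) :
    Real.exp s * μ.real A ≤ ∫ x, Real.exp (φ x) ∂μ :=
  calc Real.exp s * μ.real A
      ≤ Real.exp s * μ.real {x | Real.exp s ≤ Real.exp (φ x)} := by
        gcongr
        · exact (hφ.measure_ge_lt_top (Real.exp_pos s)).ne
        · exact fun x hx => Real.exp_le_exp.mpr (hA x hx)
    _ ≤ ∫ x, Real.exp (φ x) ∂μ :=
        mul_meas_ge_le_integral_of_nonneg (.of_forall fun x => (Real.exp_pos (φ x)).le) hφ _

lemma integral_tilted_le_add_mul_integral {g : X → ℝ} {t ρ : ℝ} (hρ : 0 ≤ ρ)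
    (hg_nonneg : ∀ x, 0 ≤ g x) (hgρ : ∀ x, t ≤ φ x → g x ≤ ρ)
    (hφ : Integrable (fun x => Real.exp (φ x)) μ) (hg : Integrable g μ) :
    ∫ x, g x ∂μ.tilted φ ≤ ρ + Real.exp t / (∫ x, Real.exp (φ x) ∂μ) * ∫ x, g x ∂μ := by
  set Z := ∫ x, Real.exp (φ x) ∂μ
  have hZ : 0 ≤ Z := integral_nonneg fun x => (Real.exp_pos (φ x)).le
  have weighted_le (x : X) :
      Real.exp (φ x) / Z * g x ≤ Real.exp (φ x) / Z * ρ + Real.exp t / Z * g x := by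
    have hgx := hg_nonneg x
    rcases le_or_gt t (φ x) with near | far
    · calc Real.exp (φ x) / Z * g x
          ≤ Real.exp (φ x) / Z * ρ := by gcongr; exact hgρ x near
        _ ≤ _ := le_add_of_nonneg_right (by positivity)
    · calc Real.exp (φ x) / Z * g x
          ≤ Real.exp t / Z * g x := by gcongr
        _ ≤ _ := le_add_of_nonneg_left (by positivity)
  have hφρ : Integrable (fun x => Real.exp (φ x) / Z * ρ) μ := (hφ.div_const Z).mul_const ρ
  calc ∫ x, g x ∂μ.tilted φ
      = ∫ x, Real.exp (φ x) / Z * g x ∂μ := by simp only [integral_tilted, smul_eq_mul, Z]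
    _ ≤ ∫ x, (Real.exp (φ x) / Z * ρ + Real.exp t / Z * g x) ∂μ :=
        integral_mono_of_nonneg
          (.of_forall fun x => mul_nonneg (div_nonneg (Real.exp_pos _).le hZ) (hg_nonneg x))
          (hφρ.add (hg.const_mul _)) (.of_forall weighted_le)
    _ = Z / Z * ρ + Real.exp t / Z * ∫ x, g x ∂μ := by
        rw [integral_add hφρ (hg.const_mul _), integral_mul_const, integral_div,
          integral_const_mul]
    _ ≤ ρ + Real.exp t / Z * ∫ x, g x ∂μ := by
        gcongr
        exact mul_le_of_le_one_left hρ (div_self_le_one Z)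

variable {F : Type*} [NormedAddCommGroup F] [NormedSpace ℝ F]

lemma integral_tilted_eq_inv_smul_integral (f : X → F) :
    ∫ x, f x ∂μ.tilted φ
      = (∫ x, Real.exp (φ x) ∂μ)⁻¹ • ∫ x, Real.exp (φ x) • f x ∂μ := by
  simp only [integral_tilted, div_eq_inv_mul, mul_smul, integral_smul]

lemma norm_integral_sub_le_integral_norm_sub [CompleteSpace F] [IsProbabilityMeasure μ]
    {f : X → F} (hf : Integrable f μ) (c : F) :
    ‖∫ x, f x ∂μ - c‖ ≤ ∫ x, ‖f x - c‖ ∂μ := by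
  have integral_sub_const : ∫ x, (f x - c) ∂μ = ∫ x, f x ∂μ - c := by
    rw [integral_sub hf (integrable_const c), integral_const, probReal_univ, one_smul]
  exact integral_sub_const ▸ norm_integral_le_integral_norm _

theorem norm_integral_tilted_sub_le [CompleteSpace F] {f : X → F} {c : F} {A : Set X}
    {s t ρ : ℝ} (hρ : 0 ≤ ρ) (hfρ : ∀ x, t ≤ φ x → ‖f x - c‖ ≤ ρ)
    (hA : ∀ x ∈ A, s ≤ φ x) (hμA : 0 < μ.real A)
    (hφ : Integrable (fun x => Real.exp (φ x)) μ)
    (hφf : Integrable (fun x => Real.exp (φ x) • f x) μ)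
    (hfc : Integrable (fun x => ‖f x - c‖) μ) :
    ‖∫ x, f x ∂μ.tilted φ - c‖
      ≤ ρ + Real.exp (t - s) / μ.real A * ∫ x, ‖f x - c‖ ∂μ := by
  have : NeZero μ := ⟨by rintro rfl; simp at hμA⟩
  have := isProbabilityMeasure_tilted hφ
  have hf : Integrable f (μ.tilted φ) := (integrable_tilted_iff hφ f).mpr hφf
  calc ‖∫ x, f x ∂μ.tilted φ - c‖
      ≤ ∫ x, ‖f x - c‖ ∂μ.tilted φ := norm_integral_sub_le_integral_norm_sub hf c
    _ ≤ ρ + Real.exp t / (∫ x, Real.exp (φ x) ∂μ) * ∫ x, ‖f x - c‖ ∂μ :=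
        integral_tilted_le_add_mul_integral hρ (fun x => norm_nonneg _) hfρ hφ hfc
    _ ≤ ρ + Real.exp t / (Real.exp s * μ.real A) * ∫ x, ‖f x - c‖ ∂μ := by
        gcongr
        exact exp_mul_measureReal_le_integral_exp hA hφ
    _ = ρ + Real.exp (t - s) / μ.real A * ∫ x, ‖f x - c‖ ∂μ := by
        rw [Real.exp_sub, div_div]

end Tilted

lemma le_rpow_div_of_le_of_growth {X : Type*} {E g : X → ℝ} {K : Set X} {Einfty η ν T : ℝ}
    (hη : 0 < η) (hν : 0 ≤ ν) (hE : ∀ x, 0 ≤ E x)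
    (hgrowth : ∀ x ∈ K, g x ≤ (1 / η) * E x ^ ν) (hfar : ∀ x ∉ K, Einfty < E x)
    (hT : T ≤ Einfty) {x : X} (hx : E x ≤ T) : g x ≤ T ^ ν / η := by
  have hxK : x ∈ K := by
    by_contra hxK
    exact (hfar x hxK).not_ge (hx.trans hT)
  calc g x ≤ (1 / η) * E x ^ ν := hgrowth x hxK
    _ = E x ^ ν / η := one_div_mul_eq_div η _
    _ ≤ T ^ ν / η := by gcongr; exact hE x

theorem stmt_3_general {F : Type*} [NormedAddCommGroup F] [NormedSpace ℝ F] [CompleteSpace F]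
    [MeasurableSpace F] {μ : Measure F} {E : F → ℝ} {vstar : F} {Einfty R0 η ν α r q : ℝ}
    (hEnonneg : ∀ v, 0 ≤ E v) (hη : 0 < η) (hν : 0 ≤ ν)
    (hcoer : ∀ v ∈ Metric.closedBall vstar R0, ‖v - vstar‖ ≤ (1 / η) * (E v) ^ ν)
    (hfar : ∀ v ∉ Metric.closedBall vstar R0, Einfty < E v)
    (hmom : Integrable (fun v => ‖v - vstar‖) μ) (hα : 0 < α)
    (hint1 : Integrable (fun v => Real.exp (-α * E v)) μ)
    (hint2 : Integrable (fun v => Real.exp (-α * E v) • v) μ)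
    (hq : 0 ≤ q) (hbdd : BddAbove (E '' Metric.closedBall vstar r))
    (hqEr : q + sSup (E '' Metric.closedBall vstar r) ≤ Einfty)
    (hmass : 0 < μ.real (Metric.closedBall vstar r)) :
    ‖(∫ v, Real.exp (-α * E v) ∂μ)⁻¹ • (∫ v, Real.exp (-α * E v) • v ∂μ) - vstar‖
      ≤ (q + sSup (E '' Metric.closedBall vstar r)) ^ ν / η
        + Real.exp (-α * q) / μ.real (Metric.closedBall vstar r) * ∫ v, ‖v - vstar‖ ∂μ := by
  set Er := sSup (E '' Metric.closedBall vstar r)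
  have Er_nonneg : 0 ≤ Er := Real.sSup_nonneg (Set.forall_mem_image.mpr fun v _ => hEnonneg v)
  have near (v : F) (hv : -α * (q + Er) ≤ -α * E v) : ‖v - vstar‖ ≤ (q + Er) ^ ν / η :=
    le_rpow_div_of_le_of_growth hη hν hEnonneg hcoer hfar hqEr
      ((mul_le_mul_left_of_neg (neg_neg_of_pos hα)).mp hv)
  have ball (v : F) (hv : v ∈ Metric.closedBall vstar r) : -α * Er ≤ -α * E v :=
    mul_le_mul_of_nonpos_left (le_csSup hbdd (Set.mem_image_of_mem E hv)) (neg_nonpos.mpr hα.le)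
  have exponent : -α * q = -α * (q + Er) - -α * Er := by ring
  rw [← integral_tilted_eq_inv_smul_integral, exponent]
  exact norm_integral_tilted_sub_le (by positivity) near ball hmass hint1 hint2 hmom

/-- Quantitative Laplace principle. -/
theorem stmt_3 (d : ℕ) (E : EuclideanSpace ℝ (Fin d) → ℝ)
    (vstar : EuclideanSpace ℝ (Fin d))
    (hE : Continuous E) (hEmin : E vstar = 0) (hEnonneg : ∀ v, 0 ≤ E v)
    (Einfty R0 η ν : ℝ) (hEinfty : 0 < Einfty) (hR0 : 0 < R0) (hη : 0 < η) (hν : 0 < ν)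
    (hcoer : ∀ v ∈ Metric.closedBall vstar R0, ‖v - vstar‖ ≤ (1 / η) * (E v) ^ ν)
    (hfar : ∀ v ∉ Metric.closedBall vstar R0, Einfty < E v)
    (μ : Measure (EuclideanSpace ℝ (Fin d))) [IsProbabilityMeasure μ]
    (hmom : Integrable (fun v => ‖v‖) μ)
    (α : ℝ) (hα : 0 < α)
    (hint1 : Integrable (fun v => Real.exp (-α * E v)) μ)
    (hint2 : Integrable (fun v => Real.exp (-α * E v) • v) μ)
    (r q : ℝ) (hrpos : 0 < r) (hrR0 : r ≤ R0) (hq : 0 < q)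
    (hqEr : q + sSup (E '' Metric.closedBall vstar r) ≤ Einfty)
    (hmass : 0 < (μ (Metric.closedBall vstar r)).toReal) :
    ‖(∫ v, Real.exp (-α * E v) ∂μ)⁻¹ • (∫ v, Real.exp (-α * E v) • v ∂μ) - vstar‖
      ≤ (q + sSup (E '' Metric.closedBall vstar r)) ^ ν / η
        + Real.exp (-α * q) / (μ (Metric.closedBall vstar r)).toReal
            * ∫ v, ‖v - vstar‖ ∂μ := by
  have hid : Integrable (fun v => v) μ := (integrable_norm_iff (by fun_prop)).mp hmom
  exact stmt_3_general hEnonneg hη hν.le hcoer hfar (hid.sub (integrable_const vstar)).norm hα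
    hint1 hint2 hq.le ((isCompact_closedBall vstar r).image hE).bddAbove hqEr hmass
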